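/- arXiv:2502.12240 — 2 statements merged into one kernel-verified Lean document; each statement's English description precedes it below -/
import Mathlib

section
/- Suppose ρ = |ψ⟩⟨ψ| is a pure state. Then for every integer n ≥ 1, Tr(T_AB^n) = Tr(T_ĀB̄^n); in particular the nonzero spectra of T_AB and T_ĀB̄ coincide with multiplicities. -/
open Matrix
open scoped Kronecker ComplexOrder ENNReal

/-!
Write the bra `⟨ψ|` and the ket `U|ψ⟩` as vectorizations of matrices `C : A' × A` and `D : B' × B`,
and let `W` be `U†` with its four tensor legs regrouped as `(A, B') × (A', B)`. Then
`T_AB = (1 ⊗ Dᵀ) W (C ⊗ 1)` and `T_ĀB̄ᵀ = (C ⊗ 1) W (1 ⊗ Dᵀ)`. Moving the first factor of either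
product to the end turns both into `W (C ⊗ Dᵀ)`, and this does not affect the traces of positive
powers.
-/

theorem matrix_mul_pow_mul {m n R : Type*} [Fintype m] [Fintype n] [DecidableEq m]
    [DecidableEq n] [Semiring R] (X : Matrix m n R) (Y : Matrix n m R) (k : ℕ) :
    (X * Y) ^ k * X = X * (Y * X) ^ k := by
  induction k with
  | zero => simp
  | succ k ih => simp only [pow_succ', Matrix.mul_assoc, ih]

theorem trace_mul_pow_comm {m n R : Type*} [Fintype m] [Fintype n] [DecidableEq m]
    [DecidableEq n] [CommSemiring R] (X : Matrix m n R) (Y : Matrix n m R) {k : ℕ} (hk : k ≠ 0) :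
    ((X * Y) ^ k).trace = ((Y * X) ^ k).trace := by
  obtain ⟨l, rfl⟩ := Nat.exists_eq_succ_of_ne_zero hk
  calc ((X * Y) ^ (l + 1)).trace
      = ((X * Y) ^ l * X * Y).trace := by rw [pow_succ, Matrix.mul_assoc]
    _ = (X * ((Y * X) ^ l * Y)).trace := by rw [matrix_mul_pow_mul, Matrix.mul_assoc]
    _ = ((Y * X) ^ (l + 1)).trace := by rw [trace_mul_comm, Matrix.mul_assoc, pow_succ]

theorem ext_of_trace_mul_kronecker {m n p q R : Type*} [Fintype m] [Fintype n] [Fintype p]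
    [Fintype q] [NonAssocSemiring R] {S T : Matrix (m × n) (p × q) R}
    (h : ∀ (X : Matrix p m R) (Y : Matrix q n R),
      (S * (X ⊗ₖ Y)).trace = (T * (X ⊗ₖ Y)).trace) :
    S = T := by
  classical
  ext ⟨i, j⟩ ⟨k, l⟩
  simpa [single_kronecker_single, trace_mul_single] using h (single k i 1) (single l j 1)

theorem trace_vecMulVec_mul {m R : Type*} [Fintype m] [NonUnitalCommSemiring R]
    (x y : m → R) (M : Matrix m m R) : (vecMulVec x y * M).trace = y ⬝ᵥ M *ᵥ x := by
  rw [vecMulVec_mul, trace_vecMulVec, dotProduct_comm, dotProduct_mulVec]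

/-- The reshuffling of an operator between bipartite spaces: the input leg `q` and the output leg
`n` are exchanged, and the new column index is ordered as `n × p` so that the matrix can be
multiplied by Kronecker products `C ⊗ₖ E` with `C : n × m` and `E : p × q`. -/
def reshuffle {m n p q R : Type*} (V : Matrix (m × n) (p × q) R) : Matrix (m × q) (n × p) R :=
  of fun i j => V (i.1, j.1) (j.2, i.2)

section Reshuffle

variable {m n p q R : Type*} [Fintype m] [Fintype n] [Fintype p] [Fintype q] [CommSemiring R]
  (C : Matrix n m R) (D : Matrix q p R) (V : Matrix (m × n) (p × q) R)

theorem vec_dotProduct_mulVec_vec_eq_trace :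
    vec C ⬝ᵥ V *ᵥ vec D = (reshuffle V * (C ⊗ₖ Dᵀ)).trace := by
  simp only [trace, diag_apply, mul_apply, dotProduct, mulVec, vec, reshuffle, of_apply,
    kronecker_apply, transpose_apply, Fintype.sum_prod_type, Finset.mul_sum]
  refine Finset.sum_congr rfl fun i _ => ?_
  rw [Finset.sum_comm_cycle]
  simp only [mul_left_comm]

theorem vec_dotProduct_kronecker_mul_mul_kronecker_mulVec_vec_eq_trace
    (X : Matrix m m R) (X' : Matrix n n R) (Y : Matrix p p R) (Y' : Matrix q q R) :
    vec C ⬝ᵥ ((X ⊗ₖ X') * V * (Y ⊗ₖ Y')) *ᵥ vec D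
      = (reshuffle V * ((X'ᵀ * C * X) ⊗ₖ (Y * Dᵀ * Y'ᵀ))).trace := by
  rw [← mulVec_mulVec, ← mulVec_mulVec, dotProduct_mulVec, vec_vecMul_kronecker,
    kronecker_mulVec_vec, vec_dotProduct_mulVec_vec_eq_trace]
  simp only [transpose_mul, transpose_transpose, Matrix.mul_assoc]

/-- Closed form of `T_AB` when the bra `⟨ψ|` is `vec C`, the evolved ket `U|ψ⟩` is `vec D` and `U†`
is `V`; the index types `m, n, p, q` stand for `A, A', B, B'`. -/
def pureSpacetimeMatrix [DecidableEq m] [DecidableEq p] : Matrix (m × p) (m × p) R :=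
  ((1 : Matrix m m R) ⊗ₖ Dᵀ) * (reshuffle V * (C ⊗ₖ (1 : Matrix p p R)))

/-- Closed form of `T_ĀB̄`, with the conventions of `pureSpacetimeMatrix`. -/
def pureSpacetimeMatrixCompl [DecidableEq n] [DecidableEq q] : Matrix (n × q) (n × q) R :=
  ((C ⊗ₖ (1 : Matrix q q R)) * (reshuffle V * ((1 : Matrix n n R) ⊗ₖ Dᵀ)))ᵀ

theorem trace_pureSpacetimeMatrix_mul_kronecker [DecidableEq m] [DecidableEq n]
    [DecidableEq p] [DecidableEq q] (X : Matrix m m R) (Y : Matrix p p R) :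
    (pureSpacetimeMatrix C D V * (X ⊗ₖ Y)).trace
      = vec C ⬝ᵥ ((X ⊗ₖ (1 : Matrix n n R)) * V * (Y ⊗ₖ (1 : Matrix q q R))) *ᵥ vec D := by
  rw [vec_dotProduct_kronecker_mul_mul_kronecker_mulVec_vec_eq_trace, pureSpacetimeMatrix,
    Matrix.mul_assoc, trace_mul_comm]
  simp only [Matrix.mul_assoc, ← mul_kronecker_mul, transpose_one, Matrix.one_mul, Matrix.mul_one]

theorem trace_pureSpacetimeMatrixCompl_mul_kronecker [DecidableEq m] [DecidableEq n]
    [DecidableEq p] [DecidableEq q] (X : Matrix n n R) (Y : Matrix q q R) :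
    (pureSpacetimeMatrixCompl C D V * (X ⊗ₖ Y)).trace
      = vec C ⬝ᵥ (((1 : Matrix m m R) ⊗ₖ X) * V * ((1 : Matrix p p R) ⊗ₖ Y)) *ᵥ vec D := by
  rw [vec_dotProduct_kronecker_mul_mul_kronecker_mulVec_vec_eq_trace, pureSpacetimeMatrixCompl,
    ← trace_transpose, transpose_mul, transpose_transpose, ← Matrix.mul_assoc, trace_mul_comm,
    ← kroneckerMap_transpose]
  simp only [Matrix.mul_assoc, ← mul_kronecker_mul, Matrix.one_mul, Matrix.mul_one]

theorem trace_pureSpacetimeMatrix_pow [DecidableEq m] [DecidableEq p] [DecidableEq q]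
    {k : ℕ} (hk : k ≠ 0) :
    (pureSpacetimeMatrix C D V ^ k).trace = ((reshuffle V * (C ⊗ₖ Dᵀ)) ^ k).trace := by
  rw [pureSpacetimeMatrix, trace_mul_pow_comm _ _ hk, Matrix.mul_assoc, ← mul_kronecker_mul,
    Matrix.one_mul, Matrix.mul_one]

theorem trace_pureSpacetimeMatrixCompl_pow [DecidableEq m] [DecidableEq n] [DecidableEq q]
    {k : ℕ} (hk : k ≠ 0) :
    (pureSpacetimeMatrixCompl C D V ^ k).trace = ((reshuffle V * (C ⊗ₖ Dᵀ)) ^ k).trace := by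
  rw [pureSpacetimeMatrixCompl, ← transpose_pow, trace_transpose, trace_mul_pow_comm _ _ hk,
    Matrix.mul_assoc, ← mul_kronecker_mul, Matrix.one_mul, Matrix.mul_one]

end Reshuffle

theorem spacetime_density_matrix_pure_state_complement_moments_general
    {A A' B B' R : Type*} [Fintype A] [Fintype A'] [Fintype B] [Fintype B']
    [DecidableEq A] [DecidableEq A'] [DecidableEq B] [DecidableEq B'] [CommSemiring R]
    (ψ χ : A × A' → R)
    (ρ : Matrix (A × A') (A × A') R) (hρ : ρ = vecMulVec ψ χ)
    (U : Matrix (B × B') (A × A') R) (V : Matrix (A × A') (B × B') R)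
    (T : Matrix (A × B) (A × B) R)
    (hT : ∀ (OA : Matrix A A R) (OB : Matrix B B R),
      (T * (OA ⊗ₖ OB)).trace
        = (ρ * (OA ⊗ₖ (1 : Matrix A' A' R)) * V * (OB ⊗ₖ (1 : Matrix B' B' R)) * U).trace)
    (T'' : Matrix (A' × B') (A' × B') R)
    (hT'' : ∀ (O : Matrix A' A' R) (O' : Matrix B' B' R),
      (T'' * (O ⊗ₖ O')).trace
        = (ρ * ((1 : Matrix A A R) ⊗ₖ O) * V * ((1 : Matrix B B R) ⊗ₖ O') * U).trace)
    {n : ℕ} (hn : n ≠ 0) :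
    (T ^ n).trace = (T'' ^ n).trace := by
  obtain ⟨C, hC⟩ := vec_bijective.surjective χ
  obtain ⟨D, hD⟩ := vec_bijective.surjective (U *ᵥ ψ)
  have trace_eq (M : Matrix (A × A') (A × A') R) (N : Matrix (B × B') (B × B') R) :
      (ρ * M * V * N * U).trace = vec C ⬝ᵥ (M * V * N) *ᵥ vec D := by
    rw [hρ, hC, hD, mulVec_mulVec, ← trace_vecMulVec_mul]
    simp only [Matrix.mul_assoc]
  have hT_eq : T = pureSpacetimeMatrix C D V := ext_of_trace_mul_kronecker fun OA OB => by
    rw [hT, trace_eq, trace_pureSpacetimeMatrix_mul_kronecker]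
  have hT''_eq : T'' = pureSpacetimeMatrixCompl C D V := ext_of_trace_mul_kronecker fun O O' => by
    rw [hT'', trace_eq, trace_pureSpacetimeMatrixCompl_mul_kronecker]
  rw [hT_eq, hT''_eq, trace_pureSpacetimeMatrix_pow C D V hn,
    trace_pureSpacetimeMatrixCompl_pow C D V hn]

/-- For a pure state `ρ = |ψ⟩⟨ψ|`, all moments of `T_AB` and `T_ĀB̄` agree:
`Tr (T_AB ^ n) = Tr (T_ĀB̄ ^ n)` for every `n ≥ 1`. -/
theorem spacetime_density_matrix_pure_state_complement_moments
    {A A' B B' : Type*} [Fintype A] [Fintype A'] [Fintype B] [Fintype B']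
    [DecidableEq A] [DecidableEq A'] [DecidableEq B] [DecidableEq B']
    (ψ : A × A' → ℂ) (hψ : star ψ ⬝ᵥ ψ = 1)
    (ρ : Matrix (A × A') (A × A') ℂ) (hρ : ρ = Matrix.vecMulVec ψ (star ψ))
    (U : Matrix (B × B') (A × A') ℂ) (hU : Uᴴ * U = 1) (hU' : U * Uᴴ = 1)
    (T : Matrix (A × B) (A × B) ℂ)
    (hT : ∀ (OA : Matrix A A ℂ) (OB : Matrix B B ℂ),
      (T * (OA ⊗ₖ OB)).trace
        = (ρ * (OA ⊗ₖ (1 : Matrix A' A' ℂ)) * Uᴴ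
            * (OB ⊗ₖ (1 : Matrix B' B' ℂ)) * U).trace)
    (T'' : Matrix (A' × B') (A' × B') ℂ)
    (hT'' : ∀ (O : Matrix A' A' ℂ) (O' : Matrix B' B' ℂ),
      (T'' * (O ⊗ₖ O')).trace
        = (ρ * ((1 : Matrix A A ℂ) ⊗ₖ O) * Uᴴ
            * ((1 : Matrix B B ℂ) ⊗ₖ O') * U).trace) :
    ∀ n : ℕ, 1 ≤ n → (T ^ n).trace = (T'' ^ n).trace := by
  exact fun n hn => spacetime_density_matrix_pure_state_complement_moments_general
    ψ (star ψ) ρ hρ U Uᴴ T hT T'' hT'' (Nat.one_le_iff_ne_zero.mp hn)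
end

section
/- (Lieb–Robinson-type bound for imagitivity) Suppose K ≥ 0 is a constant such that for all linear operators O_A on H_A and O_B on H_B, ||[(O_A ⊗ 1), U†(O_B ⊗ 1)U]||_2 ≤ K · ||O_A||_2 · ||O_B||_2. Then the 2-imagitivity obeys ||T_AB − T_AB†||_2 ≤ min(dim H_A, dim H_B) · ||ρ||_2 · K ≤ min(dim H_A, dim H_B) · K. -/
open Matrix
open scoped Kronecker ComplexOrder ENNReal

/-- The Frobenius (Hilbert--Schmidt) norm of a matrix. -/
noncomputable def frob {m n : Type*} [Fintype m] [Fintype n] (M : Matrix m n ℂ) : ℝ :=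
  Real.sqrt ((Mᴴ * M).trace.re)

/-!
Let `X = T - Tᴴ`. Taking the adjoint of the relation defining `T` shows that
`tr (X (O_A ⊗ O_B)) = tr (ρ [O_A, O_B])`, with the observables embedded in the full algebra, so by
Cauchy–Schwarz the functional `X` is bounded on product operators by `c = ‖ρ‖ K`. Testing `X`
against `E_ji ⊗ (X_ij)ᴴ`, where `X_ij` is the `(i, j)` block of `X` along the first tensor factor,
gives `‖X_ij‖ ≤ c`. There are `(dim H_A)²` such blocks, so `‖X‖ ≤ dim H_A · c`; exchanging the two
tensor factors gives the same bound with `dim H_B`.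
-/

open scoped Matrix.Norms.Frobenius

section FrobeniusNorm

variable {m n p q α : Type*} [Fintype m] [Fintype n] [Fintype p] [Fintype q]
  [SeminormedAddCommGroup α]

lemma frobenius_norm_sq_eq_sum (M : Matrix m n α) : ‖M‖ ^ 2 = ∑ i, ∑ j, ‖M i j‖ ^ 2 := by
  simp only [frobenius_norm_def, Real.rpow_two, ← Real.sqrt_eq_rpow]
  exact Real.sq_sqrt (by positivity)

lemma frobenius_norm_submatrix_equiv (M : Matrix m n α) (e : p ≃ m) (f : q ≃ n) :
    ‖M.submatrix e f‖ = ‖M‖ := by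
  simp only [frobenius_norm_def, submatrix_apply]
  congr 1
  exact Fintype.sum_equiv e _ _ fun i => Fintype.sum_equiv f _ _ fun j => rfl

lemma frobenius_norm_comp (M : Matrix m n (Matrix p q α)) : ‖comp m n p q α M‖ = ‖M‖ := by
  rw [← sq_eq_sq₀ (norm_nonneg _) (norm_nonneg _)]
  simp only [frobenius_norm_sq_eq_sum, Fintype.sum_prod_type, comp_apply]
  exact Finset.sum_congr rfl fun i _ => Finset.sum_comm

lemma frobenius_norm_single [DecidableEq m] [DecidableEq n] (i : m) (j : n) (a : α) :
    ‖single i j a‖ = ‖a‖ := by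
  rw [← sq_eq_sq₀ (norm_nonneg _) (norm_nonneg _), frobenius_norm_sq_eq_sum,
    Fintype.sum_eq_single i, Fintype.sum_eq_single j, single_apply_same]
  · intro j' hj
    simp [hj.symm]
  · intro i' hi
    simp [hi.symm]

end FrobeniusNorm

section HilbertSchmidt

variable {m n 𝕜 : Type*} [Fintype m] [Fintype n] [RCLike 𝕜]

lemma trace_conjTranspose_mul_self_eq_frobenius_norm_sq (M : Matrix m n 𝕜) :
    (Mᴴ * M).trace = ((‖M‖ ^ 2 : ℝ) : 𝕜) := by
  rw [frobenius_norm_sq_eq_sum, Finset.sum_comm]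
  simp [trace, mul_apply, RCLike.conj_mul]

lemma norm_trace_mul_le_frobenius_norm_mul (M : Matrix m n 𝕜) (N : Matrix n m 𝕜) :
    ‖(M * N).trace‖ ≤ ‖M‖ * ‖N‖ := by
  refine le_of_sq_le_sq ?_ (by positivity)
  calc ‖(M * N).trace‖ ^ 2
      ≤ (∑ x : m × n, ‖M x.1 x.2‖ * ‖N x.2 x.1‖) ^ 2 := by
        gcongr
        simp only [trace, diag_apply, mul_apply, ← Fintype.sum_prod_type']
        exact norm_sum_le_of_le _ fun x _ => norm_mul_le _ _
    _ ≤ (∑ x : m × n, ‖M x.1 x.2‖ ^ 2) * ∑ x : m × n, ‖N x.2 x.1‖ ^ 2 :=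
        Finset.sum_mul_sq_le_sq_mul_sq _ _ _
    _ = (‖M‖ * ‖N‖) ^ 2 := by
        rw [mul_pow, ← frobenius_norm_transpose N]
        simp only [frobenius_norm_sq_eq_sum, Fintype.sum_prod_type, transpose_apply]

open scoped MatrixOrder in
lemma frobenius_norm_le_trace_of_posSemidef {P : Matrix m m 𝕜} (hP : P.PosSemidef) :
    ‖P‖ ≤ RCLike.re P.trace := by
  classical
  obtain ⟨C, rfl⟩ : ∃ C : Matrix m m 𝕜, P = Cᴴ * C :=
    CStarAlgebra.nonneg_iff_eq_star_mul_self.mp hP.nonneg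
  calc ‖Cᴴ * C‖ ≤ ‖Cᴴ‖ * ‖C‖ := frobenius_norm_mul _ _
    _ = ‖C‖ ^ 2 := by rw [frobenius_norm_conjTranspose, sq]
    _ = RCLike.re (Cᴴ * C).trace := by
        rw [trace_conjTranspose_mul_self_eq_frobenius_norm_sq, RCLike.ofReal_re]

end HilbertSchmidt

section ProductOperators

variable {m n p q 𝕜 : Type*} [Fintype m] [Fintype n] [Fintype p] [Fintype q] [RCLike 𝕜]

lemma trace_mul_single_kronecker {R : Type*} [NonAssocSemiring R] [DecidableEq m] [DecidableEq n]
    (X : Matrix (m × p) (n × q) R) (i : m) (j : n) (Q : Matrix q p R) :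
    (X * (single j i 1 ⊗ₖ Q)).trace = ((comp m n p q R).symm X i j * Q).trace := by
  simp only [trace, diag_apply, mul_apply, Fintype.sum_prod_type, kronecker_apply]
  rw [Fintype.sum_eq_single i]
  · refine Finset.sum_congr rfl fun b _ => ?_
    rw [Fintype.sum_eq_single j]
    · simp
    · intro j' hj
      simp [hj.symm]
  · intro i' hi
    simp [hi.symm]

lemma trace_submatrix_swap_mul_kronecker {R : Type*} [NonUnitalNonAssocCommSemiring R]
    (X : Matrix (m × p) (n × q) R) (P : Matrix n m R) (Q : Matrix q p R) :
    (X.submatrix Prod.swap Prod.swap * (Q ⊗ₖ P)).trace = (X * (P ⊗ₖ Q)).trace := by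
  simp only [trace, diag_apply, mul_apply]
  refine Fintype.sum_equiv (Equiv.prodComm p m) _ _ fun x => ?_
  refine Fintype.sum_equiv (Equiv.prodComm q n) _ _ fun y => ?_
  simp [kroneckerMap_apply, mul_comm]

variable {X : Matrix (m × p) (n × q) 𝕜} {c : ℝ}

lemma frobenius_norm_block_le (hc : 0 ≤ c)
    (hX : ∀ (P : Matrix n m 𝕜) (Q : Matrix q p 𝕜), ‖(X * (P ⊗ₖ Q)).trace‖ ≤ c * ‖P‖ * ‖Q‖)
    (i : m) (j : n) : ‖(comp m n p q 𝕜).symm X i j‖ ≤ c := by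
  classical
  set M := (comp m n p q 𝕜).symm X i j
  have norm_sq_le : ‖M‖ ^ 2 ≤ c * ‖M‖ := by
    have h := hX (single j i 1) Mᴴ
    rwa [trace_mul_single_kronecker, trace_mul_comm,
      trace_conjTranspose_mul_self_eq_frobenius_norm_sq, RCLike.norm_ofReal, abs_sq,
      frobenius_norm_single, norm_one, mul_one, frobenius_norm_conjTranspose] at h
  nlinarith [norm_nonneg M]

lemma frobenius_norm_le_sqrt_card_fst_mul (hc : 0 ≤ c)
    (hX : ∀ (P : Matrix n m 𝕜) (Q : Matrix q p 𝕜), ‖(X * (P ⊗ₖ Q)).trace‖ ≤ c * ‖P‖ * ‖Q‖) :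
    ‖X‖ ≤ √(Fintype.card m * Fintype.card n) * c := by
  refine le_of_sq_le_sq ?_ (by positivity)
  calc ‖X‖ ^ 2 = ‖(comp m n p q 𝕜).symm X‖ ^ 2 := by
        rw [← frobenius_norm_comp, Equiv.apply_symm_apply]
    _ = ∑ i, ∑ j, ‖(comp m n p q 𝕜).symm X i j‖ ^ 2 := frobenius_norm_sq_eq_sum _
    _ ≤ ∑ _i : m, ∑ _j : n, c ^ 2 := by
        gcongr with i _ j
        exact frobenius_norm_block_le hc hX i j
    _ = (√(Fintype.card m * Fintype.card n) * c) ^ 2 := by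
        rw [mul_pow, Real.sq_sqrt (by positivity)]
        simp [mul_assoc]

lemma frobenius_norm_le_sqrt_card_snd_mul (hc : 0 ≤ c)
    (hX : ∀ (P : Matrix n m 𝕜) (Q : Matrix q p 𝕜), ‖(X * (P ⊗ₖ Q)).trace‖ ≤ c * ‖P‖ * ‖Q‖) :
    ‖X‖ ≤ √(Fintype.card p * Fintype.card q) * c := by
  rw [← frobenius_norm_submatrix_equiv X (Equiv.prodComm p m) (Equiv.prodComm q n)]
  refine frobenius_norm_le_sqrt_card_fst_mul hc fun Q P => ?_
  rw [mul_right_comm]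
  exact (congrArg norm (trace_submatrix_swap_mul_kronecker X P Q)).trans_le (hX P Q)

lemma frobenius_norm_le_min_card_mul {X : Matrix (m × p) (m × p) 𝕜} (hc : 0 ≤ c)
    (hX : ∀ (P : Matrix m m 𝕜) (Q : Matrix p p 𝕜), ‖(X * (P ⊗ₖ Q)).trace‖ ≤ c * ‖P‖ * ‖Q‖) :
    ‖X‖ ≤ min (Fintype.card m : ℝ) (Fintype.card p) * c := by
  rw [min_mul_of_nonneg _ _ hc]
  refine le_min ?_ ?_
  · simpa using frobenius_norm_le_sqrt_card_fst_mul hc hX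
  · simpa using frobenius_norm_le_sqrt_card_snd_mul hc hX

end ProductOperators

/-- `T` is the spacetime density matrix of the state `ρ` for the observables of two systems `A` and
`B`, embedded in the algebra of `ρ` by `α` and `β`: its pairing with `X ⊗ Y` is the two-time
correlator of `α X` and `β Y` in `ρ`. For an evolution `U` one takes `α X = X ⊗ 1` and
`β Y = Uᴴ (Y ⊗ 1) U`. -/
def IsSpacetimeDensityMatrix {A B m R : Type*} [Fintype A] [Fintype B] [Fintype m] [CommRing R]
    (ρ : Matrix m m R) (α : Matrix A A R → Matrix m m R) (β : Matrix B B R → Matrix m m R)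
    (T : Matrix (A × B) (A × B) R) : Prop :=
  ∀ X Y, (T * (X ⊗ₖ Y)).trace = (ρ * (α X * β Y)).trace

namespace IsSpacetimeDensityMatrix

section StarRing

variable {A B m R : Type*} [Fintype A] [Fintype B] [Fintype m] [CommRing R] [StarRing R]
  {ρ : Matrix m m R} {α : Matrix A A R → Matrix m m R} {β : Matrix B B R → Matrix m m R}
  {T : Matrix (A × B) (A × B) R}

lemma trace_conjTranspose_mul_kronecker (hT : IsSpacetimeDensityMatrix ρ α β T)
    (hρ : ρ.IsHermitian) (hα : ∀ X, α Xᴴ = (α X)ᴴ) (hβ : ∀ Y, β Yᴴ = (β Y)ᴴ)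
    (X : Matrix A A R) (Y : Matrix B B R) :
    (Tᴴ * (X ⊗ₖ Y)).trace = (ρ * (β Y * α X)).trace := by
  calc (Tᴴ * (X ⊗ₖ Y)).trace = star (T * (Xᴴ ⊗ₖ Yᴴ)).trace := by
        rw [← trace_conjTranspose, conjTranspose_mul, conjTranspose_kronecker,
          conjTranspose_conjTranspose, conjTranspose_conjTranspose, trace_mul_comm]
    _ = star (ρ * ((α X)ᴴ * (β Y)ᴴ)).trace := by rw [hT, hα, hβ]
    _ = (ρ * (β Y * α X)).trace := by
        rw [← conjTranspose_mul, ← trace_conjTranspose, conjTranspose_mul,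
          conjTranspose_conjTranspose, hρ.eq, trace_mul_comm]

lemma trace_sub_conjTranspose_mul_kronecker (hT : IsSpacetimeDensityMatrix ρ α β T)
    (hρ : ρ.IsHermitian) (hα : ∀ X, α Xᴴ = (α X)ᴴ) (hβ : ∀ Y, β Yᴴ = (β Y)ᴴ)
    (X : Matrix A A R) (Y : Matrix B B R) :
    ((T - Tᴴ) * (X ⊗ₖ Y)).trace = (ρ * (α X * β Y - β Y * α X)).trace := by
  rw [Matrix.sub_mul, trace_sub, hT X Y, hT.trace_conjTranspose_mul_kronecker hρ hα hβ,
    Matrix.mul_sub, trace_sub]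

end StarRing

lemma frobenius_norm_sub_conjTranspose_le {A B m 𝕜 : Type*} [Fintype A] [Fintype B] [Fintype m]
    [RCLike 𝕜] {ρ : Matrix m m 𝕜} {α : Matrix A A 𝕜 → Matrix m m 𝕜}
    {β : Matrix B B 𝕜 → Matrix m m 𝕜} {T : Matrix (A × B) (A × B) 𝕜} {K : ℝ}
    (hT : IsSpacetimeDensityMatrix ρ α β T) (hρ : ρ.IsHermitian) (hα : ∀ X, α Xᴴ = (α X)ᴴ)
    (hβ : ∀ Y, β Yᴴ = (β Y)ᴴ) (hK : 0 ≤ K)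
    (hLR : ∀ X Y, ‖α X * β Y - β Y * α X‖ ≤ K * ‖X‖ * ‖Y‖) :
    ‖T - Tᴴ‖ ≤ min (Fintype.card A : ℝ) (Fintype.card B) * (‖ρ‖ * K) := by
  refine frobenius_norm_le_min_card_mul (by positivity) fun X Y => ?_
  calc ‖((T - Tᴴ) * (X ⊗ₖ Y)).trace‖ = ‖(ρ * (α X * β Y - β Y * α X)).trace‖ := by
        rw [hT.trace_sub_conjTranspose_mul_kronecker hρ hα hβ]
    _ ≤ ‖ρ‖ * ‖α X * β Y - β Y * α X‖ := norm_trace_mul_le_frobenius_norm_mul _ _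
    _ ≤ ‖ρ‖ * (K * ‖X‖ * ‖Y‖) := by gcongr; exact hLR X Y
    _ = ‖ρ‖ * K * ‖X‖ * ‖Y‖ := by ring

end IsSpacetimeDensityMatrix

theorem imagitivity_lieb_robinson_bound_general {A B m 𝕜 : Type*} [Fintype A] [Fintype B]
    [Fintype m] [RCLike 𝕜] {ρ : Matrix m m 𝕜} (hρ : ρ.PosSemidef) (hρtr : ρ.trace = 1)
    {α : Matrix A A 𝕜 → Matrix m m 𝕜} (hα : ∀ X, α Xᴴ = (α X)ᴴ)
    {β : Matrix B B 𝕜 → Matrix m m 𝕜} (hβ : ∀ Y, β Yᴴ = (β Y)ᴴ)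
    {T : Matrix (A × B) (A × B) 𝕜} (hT : IsSpacetimeDensityMatrix ρ α β T)
    {K : ℝ} (hK : 0 ≤ K) (hLR : ∀ X Y, ‖α X * β Y - β Y * α X‖ ≤ K * ‖X‖ * ‖Y‖) :
    ‖T - Tᴴ‖ ≤ min (Fintype.card A : ℝ) (Fintype.card B) * ‖ρ‖ * K ∧
      min (Fintype.card A : ℝ) (Fintype.card B) * ‖ρ‖ * K
        ≤ min (Fintype.card A : ℝ) (Fintype.card B) * K := by
  have norm_le_one : ‖ρ‖ ≤ 1 := by
    simpa [hρtr] using frobenius_norm_le_trace_of_posSemidef hρ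
  rw [mul_assoc]
  refine ⟨hT.frobenius_norm_sub_conjTranspose_le hρ.isHermitian hα hβ hK hLR, ?_⟩
  gcongr
  exact mul_le_of_le_one_left hK norm_le_one

lemma frob_eq_frobenius_norm {m n : Type*} [Fintype m] [Fintype n] (M : Matrix m n ℂ) :
    frob M = ‖M‖ := by
  rw [frob, trace_conjTranspose_mul_self_eq_frobenius_norm_sq,
    RCLike.ofReal_eq_complex_ofReal, Complex.ofReal_re, Real.sqrt_sq (norm_nonneg M)]

/-- Lieb--Robinson-type bound for the 2-imagitivity: if every commutator
`[(O_A ⊗ 1), U† (O_B ⊗ 1) U]` has Frobenius norm at most `K ‖O_A‖₂ ‖O_B‖₂`,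
then `‖T_AB − T_AB†‖₂ ≤ min(dim H_A, dim H_B) · ‖ρ‖₂ · K ≤ min(dim H_A, dim H_B) · K`. -/
theorem imagitivity_lieb_robinson_bound
    {A A' B B' : Type*} [Fintype A] [Fintype A'] [Fintype B] [Fintype B']
    [DecidableEq A] [DecidableEq A'] [DecidableEq B] [DecidableEq B']
    (ρ : Matrix (A × A') (A × A') ℂ) (hρ : ρ.PosSemidef) (hρtr : ρ.trace = 1)
    (U : Matrix (B × B') (A × A') ℂ) (hU : Uᴴ * U = 1) (hU' : U * Uᴴ = 1)
    (T : Matrix (A × B) (A × B) ℂ)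
    (hT : ∀ (OA : Matrix A A ℂ) (OB : Matrix B B ℂ),
      (T * (OA ⊗ₖ OB)).trace
        = (ρ * (OA ⊗ₖ (1 : Matrix A' A' ℂ)) * Uᴴ
            * (OB ⊗ₖ (1 : Matrix B' B' ℂ)) * U).trace)
    (K : ℝ) (hK : 0 ≤ K)
    (hLR : ∀ (OA : Matrix A A ℂ) (OB : Matrix B B ℂ),
      frob ((OA ⊗ₖ (1 : Matrix A' A' ℂ)) * (Uᴴ * (OB ⊗ₖ (1 : Matrix B' B' ℂ)) * U)
          - (Uᴴ * (OB ⊗ₖ (1 : Matrix B' B' ℂ)) * U) * (OA ⊗ₖ (1 : Matrix A' A' ℂ)))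
        ≤ K * frob OA * frob OB) :
    frob (T - Tᴴ) ≤ (min (Fintype.card A) (Fintype.card B) : ℝ) * frob ρ * K ∧
      (min (Fintype.card A) (Fintype.card B) : ℝ) * frob ρ * K
        ≤ (min (Fintype.card A) (Fintype.card B) : ℝ) * K := by
  simp only [frob_eq_frobenius_norm] at hLR ⊢
  exact imagitivity_lieb_robinson_bound_general hρ hρtr
    (fun X => by rw [conjTranspose_kronecker, conjTranspose_one])
    (fun Y => by simp [conjTranspose_kronecker, Matrix.mul_assoc])
    (fun X Y => by simpa only [Matrix.mul_assoc] using hT X Y) hK hLR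
end
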